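/- Let R be a standard graded algebra over a field K, let d > 0 be a degree, and let l_1,…,l_r be linear forms of R satisfying property (Gr,d). Then dim_K (R/(l_1))_d ≤ (dim_K R_d)_{⟨d⟩}. -/

import Mathlib

/-- Polynomial functions on a `K`-vector space `V`: the subalgebra of `V → K`
generated by the linear functionals. -/
def polyFuns (K V : Type*) [Field K] [AddCommGroup V] [Module K V] : Subalgebra K (V → K) :=
  Algebra.adjoin K {f : V → K | ∃ φ : V →ₗ[K] K, ⇑φ = f}

/-- A subset of (the affine space of) a `K`-vector space is Zariski closed if it is the
common zero locus of a family of polynomial functions. -/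
def IsZClosed (K : Type*) {V : Type*} [Field K] [AddCommGroup V] [Module K V]
    (Z : Set V) : Prop :=
  ∃ S : Set (V → K), (∀ f ∈ S, f ∈ polyFuns K V) ∧ Z = {v | ∀ f ∈ S, f v = 0}

/-- A subset is Zariski open if its complement is Zariski closed. -/
def IsZOpen (K : Type*) {V : Type*} [Field K] [AddCommGroup V] [Module K V]
    (U : Set V) : Prop :=
  IsZClosed K Uᶜ

/-- An irreducible variety: a nonempty Zariski closed set which is not the union of two
proper closed subsets. -/
def IsIrredVariety (K : Type*) {V : Type*} [Field K] [AddCommGroup V] [Module K V]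
    (W : Set V) : Prop :=
  IsZClosed K W ∧ W.Nonempty ∧
    ∀ Z₁ Z₂ : Set V, IsZClosed K Z₁ → IsZClosed K Z₂ → W ⊆ Z₁ ∪ Z₂ → (W ⊆ Z₁ ∨ W ⊆ Z₂)

/-- Auxiliary recursion for `wordIdeal`: letters are booleans, `true` standing for the
letter `c` (colon) and `false` for the letter `s` (sum). The natural number argument keeps
track of which linear form is to be used next (0-indexed). -/
def wordIdealAux {R : Type*} [CommRing R] (l : ℕ → R) : ℕ → Ideal R → List Bool → Ideal R
  | _, I, [] => I
  | j, I, a :: o =>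
      wordIdealAux l (j + 1)
        (if a then I.colon (Ideal.span {l j}) else I ⊔ Ideal.span {l j}) o

/-- The ideal `I_{l,o}` attached to a sequence of (linear) forms `l` and a word `o` in the
letters `{c, s}` (here `c = true`, `s = false`): starting from `(0)`, the `j`-th letter
either colons (`c`) or adds (`s`) the `j`-th form. -/
def wordIdeal {R : Type*} [CommRing R] (l : ℕ → R) (o : List Bool) : Ideal R :=
  wordIdealAux l 0 ⊥ o

/-- The degree `d` component `I ∩ R_d` of an ideal `I`, as a `K`-subspace of `𝒜 d`. -/
def homComp {K R : Type*} [Field K] [CommRing R] [Algebra K R]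
    (𝒜 : ℕ → Submodule K R) (I : Ideal R) (d : ℕ) : Submodule K (𝒜 d) :=
  Submodule.comap (𝒜 d).subtype (Submodule.restrictScalars K I)

/-- `dim_K (I)_d`, the dimension of the degree `d` component of the (homogeneous) ideal `I`. -/
noncomputable def homDim {K R : Type*} [Field K] [CommRing R] [Algebra K R]
    (𝒜 : ℕ → Submodule K R) (I : Ideal R) (d : ℕ) : ℕ :=
  Module.finrank K (homComp 𝒜 I d)

/-- `dim_K (R/I)_d`, the dimension of the degree `d` component of `R/I` for a
(homogeneous) ideal `I`, computed as `dim 𝒜 d / (I ∩ 𝒜 d)`. -/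
noncomputable def quotDim {K R : Type*} [Field K] [CommRing R] [Algebra K R]
    (𝒜 : ℕ → Submodule K R) (I : Ideal R) (d : ℕ) : ℕ :=
  Module.finrank K ((𝒜 d) ⧸ homComp 𝒜 I d)

/-- `macaulayDown c d = c_⟨d⟩`: if `c = C(k_d,d) + … + C(k_1,1)` is the `d`-th Macaulay
representation of `c`, then `c_⟨d⟩ = C(k_d - 1,d) + … + C(k_1 - 1,1)`; computed greedily. -/
def macaulayDown : ℕ → ℕ → ℕ
  | _, 0 => 0
  | c, d + 1 =>
      let k := Nat.findGreatest (fun k => Nat.choose k (d + 1) ≤ c) (c + d + 1)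
      Nat.choose (k - 1) (d + 1) + macaulayDown (c - Nat.choose k (d + 1)) d

/-- Property (Gr,d) for the linear forms `l 0, …, l (r-1)` (letters: `true = c`,
`false = s`): for every word `o` of length `i ≤ r`,
(1) if `m ⊄ I_o` and `i < r` then `l_{i+1} ∉ I_o`;
(2) if `i = r` and `|o|_c < d` then `m ⊆ I_o`;
(3) if `i ≤ r - 2` then `dim (I_{o,c,s})_{d - |o|_c - 1} ≤ dim (I_{o,s,c})_{d - |o|_c - 1}`. -/
def GrProp {K R : Type*} [Field K] [CommRing R] [Algebra K R]
    (𝒜 : ℕ → Submodule K R) [GradedAlgebra 𝒜] (l : ℕ → R) (r d : ℕ) : Prop :=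
  ∀ o : List Bool, o.length ≤ r →
    (¬ (HomogeneousIdeal.irrelevant 𝒜).toIdeal ≤ wordIdeal l o → o.length < r →
        l o.length ∉ wordIdeal l o) ∧
    (o.length = r → o.count true < d →
        (HomogeneousIdeal.irrelevant 𝒜).toIdeal ≤ wordIdeal l o) ∧
    (o.length + 2 ≤ r →
        homDim 𝒜 (wordIdeal l (o ++ [true, false])) (d - o.count true - 1) ≤
          homDim 𝒜 (wordIdeal l (o ++ [false, true])) (d - o.count true - 1))

/-!
For a homogeneous ideal `I` and a linear form `x`, multiplication by `x` gives an exact sequence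
`0 → (R/(I : x))_{e-1} → (R/I)_e → (R/(I + x))_e → 0`. For a word `o` put `e = d - |o|_c`,
`c = dim (R/I_o)_e` and `b = dim (R/I_{o,s})_e`, so that `c - b = dim (R/I_{o,c})_{e-1}`. The exact
sequence for `I_{o,s}` together with condition (3) gives
`b ≤ dim (R/I_{o,c,s})_{e-1} + dim (R/I_{o,s,s})_e`, and descending induction on the length of `o`
bounds the right-hand side by `(c - b)_⟨e-1⟩ + b_⟨e⟩`. This inequality alone forces `b ≤ c_⟨e⟩`.
-/

section MacaulayDown

theorem le_choose_succ_add (k d : ℕ) : k ≤ k.choose (d + 1) + d := by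
  induction k with
  | zero => exact Nat.zero_le _
  | succ k ih =>
    rw [Nat.choose_succ_succ']
    rcases le_or_gt d k with hdk | hkd
    · have := Nat.choose_pos hdk
      omega
    · omega

theorem exists_eq_choose_succ_add (d : ℕ) {c : ℕ} (hc : 0 < c) :
    ∃ k c', d ≤ k ∧ c = (k + 1).choose (d + 1) + c' ∧ c' < (k + 1).choose d := by
  induction c, hc using Nat.le_induction with
  | base => exact ⟨d, 0, le_rfl, by simp, by simp⟩
  | succ c _ ih =>
    obtain ⟨k, c', hdk, rfl, hc'⟩ := ih
    rcases (Nat.succ_le_of_lt hc').lt_or_eq with hlt | heq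
    · exact ⟨k, c' + 1, hdk, add_assoc _ _ _, hlt⟩
    · refine ⟨k + 1, 0, by omega, ?_, Nat.choose_pos (by omega)⟩
      rw [Nat.choose_succ_succ' (k + 1) d]
      omega

theorem macaulayDown_choose_succ_add_of_lt {d k c : ℕ} (hc : c < (k + 1).choose d) :
    macaulayDown ((k + 1).choose (d + 1) + c) (d + 1) =
      k.choose (d + 1) + macaulayDown c d := by
  have greedy : Nat.findGreatest (fun j => j.choose (d + 1) ≤ (k + 1).choose (d + 1) + c)
      ((k + 1).choose (d + 1) + c + d + 1) = k + 1 := by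
    refine Nat.findGreatest_eq_iff.mpr ⟨?_, fun _ => Nat.le_add_right _ _, fun j hj _ hle => ?_⟩
    · have := le_choose_succ_add (k + 1) d
      omega
    · have := Nat.choose_le_choose (d + 1) (Nat.succ_le_of_lt hj)
      rw [Nat.succ_eq_add_one, Nat.choose_succ_succ'] at this
      omega
  simp only [macaulayDown, greedy, Nat.add_sub_cancel, Nat.add_sub_cancel_left]

theorem macaulayDown_zero_left (d : ℕ) : macaulayDown 0 d = 0 := by
  induction d with
  | zero => rfl
  | succ d ih =>
    cases d with
    | zero => rfl
    | succ d =>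
      have := macaulayDown_choose_succ_add_of_lt (d := d + 1) (k := d) (c := 0) (by simp)
      simpa [ih, Nat.choose_eq_zero_of_lt] using this

theorem macaulayDown_one_right (c : ℕ) : macaulayDown c 1 = c - 1 := by
  simp [macaulayDown]

theorem macaulayDown_choose_succ (k d : ℕ) :
    macaulayDown ((k + 1).choose (d + 1)) (d + 1) = k.choose (d + 1) := by
  rcases le_or_gt d (k + 1) with hdk | hkd
  · simpa [macaulayDown_zero_left] using
      macaulayDown_choose_succ_add_of_lt (Nat.choose_pos hdk)
  · rw [Nat.choose_eq_zero_of_lt (by omega), Nat.choose_eq_zero_of_lt (by omega),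
      macaulayDown_zero_left]

theorem macaulayDown_one_left (d : ℕ) : macaulayDown 1 d = 0 := by
  cases d with
  | zero => rfl
  | succ d => simpa using macaulayDown_choose_succ d d

-- Both sides agree at the non-greedy endpoint `c = C(k + 1, d + 1)` because of Pascal's rule.
theorem macaulayDown_choose_succ_add_of_le {d k c : ℕ} (hc : c ≤ (k + 1).choose (d + 1)) :
    macaulayDown ((k + 1).choose (d + 2) + c) (d + 2) =
      k.choose (d + 2) + macaulayDown c (d + 1) := by
  rcases hc.lt_or_eq with hlt | rfl
  · exact macaulayDown_choose_succ_add_of_lt hlt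
  · calc macaulayDown ((k + 1).choose (d + 2) + (k + 1).choose (d + 1)) (d + 2)
        = macaulayDown ((k + 2).choose (d + 2)) (d + 2) := by
          rw [Nat.choose_succ_succ' (k + 1) (d + 1), add_comm]
      _ = (k + 1).choose (d + 2) := macaulayDown_choose_succ (k + 1) (d + 1)
      _ = k.choose (d + 2) + k.choose (d + 1) := by
          rw [Nat.choose_succ_succ' k (d + 1), add_comm]
      _ = k.choose (d + 2) + macaulayDown ((k + 1).choose (d + 1)) (d + 1) := by
          rw [macaulayDown_choose_succ]

theorem macaulayDown_le_succ_and_succ_le (c d : ℕ) :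
    macaulayDown c d ≤ macaulayDown (c + 1) d ∧
      macaulayDown (c + 1) d ≤ macaulayDown c d + 1 := by
  induction d generalizing c with
  | zero => simp [macaulayDown]
  | succ d ih =>
    rcases Nat.eq_zero_or_pos c with rfl | hc
    · simp [macaulayDown_zero_left, macaulayDown_one_left]
    cases d with
    | zero => simp only [zero_add, macaulayDown_one_right]; omega
    | succ d =>
      obtain ⟨k, c', -, rfl, hc'⟩ := exists_eq_choose_succ_add (d + 1) hc
      rw [macaulayDown_choose_succ_add_of_le hc'.le, add_assoc,
        macaulayDown_choose_succ_add_of_le hc']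
      exact ⟨Nat.add_le_add_left (ih c').1 _, Nat.add_le_add_left (ih c').2 _⟩

theorem macaulayDown_mono (d : ℕ) : Monotone (macaulayDown · d) :=
  monotone_nat_of_le_succ fun c => (macaulayDown_le_succ_and_succ_le c d).1

theorem macaulayDown_add_le (a n d : ℕ) : macaulayDown (a + n) d ≤ macaulayDown a d + n := by
  induction n with
  | zero => exact le_rfl
  | succ n ih => exact (macaulayDown_le_succ_and_succ_le (a + n) d).2.trans (Nat.succ_le_succ ih)

theorem macaulayDown_choose_succ_pred_lt {k d : ℕ} (hdk : d < k) :
    macaulayDown ((k + 1).choose (d + 1) - 1) (d + 1) < k.choose (d + 1) := by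
  induction d generalizing k with
  | zero => simp only [zero_add, macaulayDown_one_right, Nat.choose_one_right]; omega
  | succ d ih =>
    obtain ⟨j, rfl⟩ : ∃ j, k = j + 1 := ⟨k - 1, by omega⟩
    have hpos : 0 < (j + 1).choose (d + 1) := Nat.choose_pos (by omega)
    have hpred : (j + 2).choose (d + 2) - 1 =
        (j + 1).choose (d + 2) + ((j + 1).choose (d + 1) - 1) := by
      rw [Nat.choose_succ_succ' (j + 1) (d + 1), add_comm, Nat.add_sub_assoc hpos]
    calc macaulayDown ((j + 2).choose (d + 2) - 1) (d + 2)
        = j.choose (d + 2) + macaulayDown ((j + 1).choose (d + 1) - 1) (d + 1) := by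
          rw [hpred, macaulayDown_choose_succ_add_of_le (Nat.sub_le _ _)]
      _ < j.choose (d + 2) + j.choose (d + 1) := by
          gcongr
          exact ih (by omega)
      _ = (j + 1).choose (d + 2) := by rw [Nat.choose_succ_succ' j (d + 1), add_comm]

theorem macaulayDown_lt_choose {c d k : ℕ} (hdk : d < k) (hc : c < (k + 1).choose (d + 1)) :
    macaulayDown c (d + 1) < k.choose (d + 1) :=
  (macaulayDown_mono (d + 1) (Nat.le_sub_one_of_lt hc)).trans_lt
    (macaulayDown_choose_succ_pred_lt hdk)

theorem le_macaulayDown_add_choose {c d k : ℕ} (hc : c ≤ (k + 1).choose (d + 1)) :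
    c ≤ macaulayDown c (d + 1) + k.choose d := by
  have hlip := macaulayDown_add_le c ((k + 1).choose (d + 1) - c) (d + 1)
  rw [Nat.add_sub_cancel' hc, macaulayDown_choose_succ] at hlip
  have := Nat.choose_succ_succ' k d
  omega

-- Stripping the leading binomial coefficient off `c` strips one off every argument below, and by
-- Pascal's rule the leading terms cancel, which leaves the same inequality one degree lower.
theorem macaulayDown_sub_add_macaulayDown_succ_le (c d : ℕ) :
    macaulayDown (c - (macaulayDown c (d + 1) + 1)) d +
      macaulayDown (macaulayDown c (d + 1) + 1) (d + 1) ≤ macaulayDown c (d + 1) := by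
  induction d generalizing c with
  | zero => simp [macaulayDown]
  | succ d ih =>
    rcases Nat.eq_zero_or_pos c with rfl | hc
    · simp [macaulayDown_zero_left, macaulayDown_one_left]
    obtain ⟨k, c', hdk, rfl, hc'⟩ := exists_eq_choose_succ_add (d + 1) hc
    obtain ⟨j, rfl⟩ : ∃ j, k = j + 1 := ⟨k - 1, by omega⟩
    rw [macaulayDown_choose_succ_add_of_le hc'.le, add_assoc ((j + 1).choose (d + 2))]
    set b' := macaulayDown c' (d + 1) + 1
    have hb'_le : b' ≤ (j + 1).choose (d + 1) := macaulayDown_lt_choose (by omega) hc'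
    have hsub_lt : c' - b' < (j + 1).choose d := by
      have := le_macaulayDown_add_choose hc'.le
      have : 0 < (j + 1).choose d := Nat.choose_pos (by omega)
      omega
    have hsub_le : (j + 2).choose (d + 2) + c' - ((j + 1).choose (d + 2) + b') ≤
        (j + 1).choose (d + 1) + (c' - b') := by
      have : (j + 2).choose (d + 2) = (j + 1).choose (d + 1) + (j + 1).choose (d + 2) :=
        Nat.choose_succ_succ' (j + 1) (d + 1)
      omega
    calc macaulayDown ((j + 2).choose (d + 2) + c' - ((j + 1).choose (d + 2) + b')) (d + 1) +
          macaulayDown ((j + 1).choose (d + 2) + b') (d + 2)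
        ≤ macaulayDown ((j + 1).choose (d + 1) + (c' - b')) (d + 1) +
          macaulayDown ((j + 1).choose (d + 2) + b') (d + 2) :=
          Nat.add_le_add_right (macaulayDown_mono (d + 1) hsub_le) _
      _ = (j.choose (d + 1) + macaulayDown (c' - b') d) +
          (j.choose (d + 2) + macaulayDown b' (d + 1)) := by
          rw [macaulayDown_choose_succ_add_of_lt hsub_lt,
            macaulayDown_choose_succ_add_of_le hb'_le]
      _ = (j + 1).choose (d + 2) +
          (macaulayDown (c' - b') d + macaulayDown b' (d + 1)) := by
          rw [Nat.choose_succ_succ' j (d + 1)]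
          ring
      _ ≤ (j + 1).choose (d + 2) + macaulayDown c' (d + 1) := Nat.add_le_add_left (ih c') _

theorem le_macaulayDown_of_le_add {b c d : ℕ}
    (h : b ≤ macaulayDown (c - b) d + macaulayDown b (d + 1)) : b ≤ macaulayDown c (d + 1) := by
  by_contra! hlt
  obtain ⟨n, rfl⟩ := Nat.exists_eq_add_of_le (Nat.succ_le_of_lt hlt)
  set b₀ := (macaulayDown c (d + 1)).succ
  have hkey : macaulayDown (c - b₀) d + macaulayDown b₀ (d + 1) < b₀ :=
    Nat.lt_succ_of_le (macaulayDown_sub_add_macaulayDown_succ_le c d)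
  have hmono : macaulayDown (c - (b₀ + n)) d ≤ macaulayDown (c - b₀) d :=
    macaulayDown_mono d (by omega)
  have hlip : macaulayDown (b₀ + n) (d + 1) ≤ macaulayDown b₀ (d + 1) + n :=
    macaulayDown_add_le b₀ n (d + 1)
  omega

end MacaulayDown

theorem finrank_quotient_eq_finrank_quotient_comap_add {K V W : Type*} [DivisionRing K]
    [AddCommGroup V] [Module K V] [AddCommGroup W] [Module K W] [FiniteDimensional K W]
    (f : V →ₗ[K] W) (p : Submodule K W) :
    Module.finrank K (W ⧸ p) =
      Module.finrank K (V ⧸ p.comap f) + Module.finrank K (W ⧸ p ⊔ LinearMap.range f) := by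
  let g := p.mkQ ∘ₗ f
  have hker : LinearMap.ker g = p.comap f := by rw [LinearMap.ker_comp, Submodule.ker_mkQ]
  have hrange : LinearMap.range g = (LinearMap.range f).map p.mkQ := LinearMap.range_comp f p.mkQ
  calc Module.finrank K (W ⧸ p)
      = Module.finrank K (LinearMap.range g) +
          Module.finrank K ((W ⧸ p) ⧸ LinearMap.range g) := by
        rw [add_comm, Submodule.finrank_quotient_add_finrank]
    _ = Module.finrank K (V ⧸ p.comap f) + Module.finrank K (W ⧸ p ⊔ LinearMap.range f) := by
        rw [← g.quotKerEquivRange.finrank_eq, hker, hrange,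
          (Submodule.quotientQuotientEquivQuotientSup p (LinearMap.range f)).finrank_eq]

section WordIdeal

variable {R : Type*} [CommRing R] (l : ℕ → R)

theorem wordIdealAux_append (o o' : List Bool) (j : ℕ) (I : Ideal R) :
    wordIdealAux l j I (o ++ o') =
      wordIdealAux l (j + o.length) (wordIdealAux l j I o) o' := by
  induction o generalizing j I with
  | nil => rfl
  | cons a o ih =>
    simp only [List.cons_append, wordIdealAux, ih, List.length_cons, add_assoc, add_comm 1]

theorem wordIdeal_nil : wordIdeal l [] = ⊥ := rfl

theorem wordIdeal_append_true (o : List Bool) :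
    wordIdeal l (o ++ [true]) = (wordIdeal l o).colon (Ideal.span {l o.length}) := by
  simp [wordIdeal, wordIdealAux_append, wordIdealAux]

theorem wordIdeal_append_false (o : List Bool) :
    wordIdeal l (o ++ [false]) = wordIdeal l o ⊔ Ideal.span {l o.length} := by
  simp [wordIdeal, wordIdealAux_append, wordIdealAux]

theorem wordIdeal_replicate_false (n : ℕ) :
    wordIdeal l (List.replicate n false) = Ideal.span (l '' Set.Iio n) := by
  induction n with
  | zero => simp [wordIdeal_nil]
  | succ n ih =>
    rw [List.replicate_succ', wordIdeal_append_false, ih, List.length_replicate,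
      ← Ideal.span_union, ← Set.image_singleton, ← Set.image_union, Set.union_singleton,
      ← Order.Iio_succ_eq_insert, Order.succ_eq_add_one]

end WordIdeal

section Homogeneous

variable {ι σ R : Type*} [DecidableEq ι] [AddRightCancelMonoid ι] [CommRing R] [SetLike σ R]
  [AddSubmonoidClass σ R] {𝒜 : ι → σ} [GradedRing 𝒜]

theorem isHomogeneous_colon_span_singleton {I : Ideal R} (hI : I.IsHomogeneous 𝒜)
    {x : R} (hx : SetLike.IsHomogeneousElem 𝒜 x) :
    (I.colon (Ideal.span {x})).IsHomogeneous 𝒜 := by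
  obtain ⟨j, hj⟩ := hx
  intro i y hy
  rw [Ideal.mem_colon_span_singleton] at hy ⊢
  rw [← DirectSum.coe_decompose_mul_add_of_right_mem 𝒜 hj]
  exact hI (i + j) hy

theorem isHomogeneous_wordIdeal {l : ℕ → R} (o : List Bool)
    (hl : ∀ j < o.length, SetLike.IsHomogeneousElem 𝒜 (l j)) :
    (wordIdeal l o).IsHomogeneous 𝒜 := by
  induction o using List.reverseRecOn with
  | nil => exact Ideal.IsHomogeneous.bot 𝒜
  | append_singleton o a ih =>
    have hlast : SetLike.IsHomogeneousElem 𝒜 (l o.length) := hl _ (by simp)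
    have hinit := ih fun j hj => hl j (by grind)
    cases a with
    | true =>
      rw [wordIdeal_append_true]
      exact isHomogeneous_colon_span_singleton hinit hlast
    | false =>
      rw [wordIdeal_append_false]
      exact hinit.sup (Ideal.homogeneous_span 𝒜 _ fun _ hx => hx ▸ hlast)

end Homogeneous

section QuotDim

variable {K R : Type*} [Field K] [CommRing R] [Algebra K R] (𝒜 : ℕ → Submodule K R)

theorem quotDim_add_homDim (I : Ideal R) (n : ℕ) [FiniteDimensional K (𝒜 n)] :
    quotDim 𝒜 I n + homDim 𝒜 I n = Module.finrank K (𝒜 n) :=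
  (homComp 𝒜 I n).finrank_quotient_add_finrank

theorem quotDim_bot (n : ℕ) : quotDim 𝒜 ⊥ n = Module.finrank K (𝒜 n) := by
  have hbot : homComp 𝒜 ⊥ n = ⊥ := by
    ext y
    simp [homComp]
  exact (Submodule.quotEquivOfEqBot _ hbot).finrank_eq

variable [GradedAlgebra 𝒜]

theorem quotDim_zero_pos {I : Ideal R} (hI : 1 ∉ I) [FiniteDimensional K (𝒜 0)] :
    0 < quotDim 𝒜 I 0 := by
  have hne : homComp 𝒜 I 0 ≠ ⊤ := fun htop =>
    hI (htop ▸ Submodule.mem_top : ⟨1, SetLike.GradedOne.one_mem⟩ ∈ homComp 𝒜 I 0)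
  have := Submodule.Quotient.nontrivial_iff.mpr hne
  exact Module.finrank_pos

theorem quotDim_eq_zero_of_irrelevant_le {I : Ideal R}
    (hI : (HomogeneousIdeal.irrelevant 𝒜).toIdeal ≤ I) {n : ℕ} (hn : 0 < n) :
    quotDim 𝒜 I n = 0 := by
  have htop : homComp 𝒜 I n = ⊤ :=
    eq_top_iff.mpr fun y _ => hI (HomogeneousIdeal.mem_irrelevant_of_mem 𝒜 hn y.2)
  have := Submodule.Quotient.subsingleton_iff.mpr htop
  exact Module.finrank_zero_of_subsingleton

/-- Multiplication by `x ∈ R_j` as a linear map `R_n → R_{n+j}`, whose kernel and cokernel modulo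
`I` are governed by the ideals `I : x` and `I + (x)`. -/
def mulGraded {j : ℕ} (x : 𝒜 j) (n : ℕ) : 𝒜 n →ₗ[K] 𝒜 (n + j) :=
  (DirectSum.gMulLHom K (fun i => 𝒜 i)).flip x

theorem coe_mulGraded {j n : ℕ} (x : 𝒜 j) (y : 𝒜 n) : (mulGraded 𝒜 x n y : R) = y * x := rfl

theorem homComp_colon_span_singleton (I : Ideal R) {j : ℕ} (x : 𝒜 j) (n : ℕ) :
    homComp 𝒜 (I.colon (Ideal.span {(x : R)})) n =
      (homComp 𝒜 I (n + j)).comap (mulGraded 𝒜 x n) := by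
  ext y
  exact Ideal.mem_colon_span_singleton

theorem homComp_sup_span_singleton {I : Ideal R} (hI : I.IsHomogeneous 𝒜) {j : ℕ} (x : 𝒜 j)
    (n : ℕ) :
    homComp 𝒜 (I ⊔ Ideal.span {(x : R)}) (n + j) =
      homComp 𝒜 I (n + j) ⊔ LinearMap.range (mulGraded 𝒜 x n) := by
  apply le_antisymm
  · intro z hz
    obtain ⟨a, ha, t, ht, hat⟩ := Submodule.mem_sup.mp (show (z : R) ∈ I ⊔ _ from hz)
    obtain ⟨y, rfl⟩ := Ideal.mem_span_singleton'.mp ht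
    refine Submodule.mem_sup.mpr ⟨DirectSum.decompose 𝒜 a (n + j), hI (n + j) ha,
      _, ⟨DirectSum.decompose 𝒜 y n, rfl⟩, Subtype.ext ?_⟩
    rw [Submodule.coe_add, coe_mulGraded,
      ← DirectSum.coe_decompose_mul_add_of_right_mem 𝒜 x.2, ← Submodule.coe_add,
      ← DirectSum.add_apply, ← DirectSum.decompose_add, hat,
      DirectSum.decompose_of_mem_same 𝒜 z.2]
  · refine sup_le (fun z hz => Submodule.mem_sup_left hz) ?_
    rintro _ ⟨y, rfl⟩
    exact Submodule.mem_sup_right (Ideal.mul_mem_left _ _ (Ideal.mem_span_singleton_self _))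

theorem quotDim_eq_quotDim_colon_add_quotDim_sup {I : Ideal R} (hI : I.IsHomogeneous 𝒜)
    {j : ℕ} {x : R} (hx : x ∈ 𝒜 j) (n : ℕ) [FiniteDimensional K (𝒜 (n + j))] :
    quotDim 𝒜 I (n + j) = quotDim 𝒜 (I.colon (Ideal.span {x})) n +
      quotDim 𝒜 (I ⊔ Ideal.span {x}) (n + j) := by
  lift x to 𝒜 j using hx
  rw [quotDim, quotDim, quotDim, homComp_colon_span_singleton, homComp_sup_span_singleton 𝒜 hI]
  exact finrank_quotient_eq_finrank_quotient_comap_add (mulGraded 𝒜 x n) (homComp 𝒜 I (n + j))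

theorem quotDim_wordIdeal_succ {l : ℕ → R} {o : List Bool} (hl : ∀ j ≤ o.length, l j ∈ 𝒜 1)
    (n : ℕ) [FiniteDimensional K (𝒜 (n + 1))] :
    quotDim 𝒜 (wordIdeal l o) (n + 1) = quotDim 𝒜 (wordIdeal l (o ++ [true])) n +
      quotDim 𝒜 (wordIdeal l (o ++ [false])) (n + 1) := by
  rw [wordIdeal_append_true, wordIdeal_append_false]
  exact quotDim_eq_quotDim_colon_add_quotDim_sup 𝒜
    (isHomogeneous_wordIdeal o fun j hj => ⟨1, hl j hj.le⟩) (hl _ le_rfl) n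

theorem component_succ_le_mul_span {s : Set R} (hs : s ⊆ 𝒜 1)
    (hgen : (HomogeneousIdeal.irrelevant 𝒜).toIdeal ≤ Ideal.span s) (n : ℕ) :
    𝒜 (n + 1) ≤ 𝒜 n * Submodule.span K s := by
  have hspan : ∀ x ∈ Ideal.span s, ∀ a : R,
      (DirectSum.decompose 𝒜 (a * x) (n + 1) : R) ∈ 𝒜 n * Submodule.span K s := by
    intro x hx
    induction hx using Submodule.span_induction with
    | mem x hx =>
      intro a
      rw [DirectSum.coe_decompose_mul_add_of_right_mem 𝒜 (hs hx)]
      exact Submodule.mul_mem_mul (SetLike.coe_mem _) (Submodule.subset_span hx)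
    | zero => simp
    | add x y _ _ ihx ihy =>
      intro a
      rw [mul_add, DirectSum.decompose_add, DirectSum.add_apply, Submodule.coe_add]
      exact add_mem (ihx a) (ihy a)
    | smul b x _ ih =>
      intro a
      rw [smul_eq_mul, ← mul_assoc]
      exact ih (a * b)
  intro x hx
  have hmem := hspan x (hgen (HomogeneousIdeal.mem_irrelevant_of_mem 𝒜 n.succ_pos hx)) 1
  rwa [one_mul, DirectSum.decompose_of_mem_same 𝒜 hx] at hmem

theorem finiteDimensional_component_of_irrelevant_le_span [FiniteDimensional K (𝒜 0)] {s : Set R}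
    (hfin : s.Finite) (hs : s ⊆ 𝒜 1)
    (hgen : (HomogeneousIdeal.irrelevant 𝒜).toIdeal ≤ Ideal.span s) (n : ℕ) :
    FiniteDimensional K (𝒜 n) := by
  induction n with
  | zero => infer_instance
  | succ n ih =>
    have : FiniteDimensional K (𝒜 n * Submodule.span K s : Submodule K R) :=
      Module.Finite.iff_fg.mpr ((Module.Finite.iff_fg.mp ih).mul (Submodule.fg_span hfin))
    exact Submodule.finiteDimensional_of_le (component_succ_le_mul_span 𝒜 hs hgen n)

end QuotDim

namespace GrProp

variable {K R : Type*} [Field K] [CommRing R] [Algebra K R] {𝒜 : ℕ → Submodule K R}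
  [GradedAlgebra 𝒜] {l : ℕ → R} {r d : ℕ}

theorem finiteDimensional_component [FiniteDimensional K (𝒜 0)] (hGr : GrProp 𝒜 l r d)
    (hd : 0 < d) (hl : ∀ j < r, l j ∈ 𝒜 1) (n : ℕ) : FiniteDimensional K (𝒜 n) := by
  have hgen := (hGr (List.replicate r false) (by simp)).2.1 (by simp)
    (by simpa [List.count_replicate] using hd)
  rw [wordIdeal_replicate_false] at hgen
  exact finiteDimensional_component_of_irrelevant_le_span 𝒜 ((Set.finite_Iio r).image l)
    (Set.image_subset_iff.mpr hl) hgen n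

variable [∀ n, FiniteDimensional K (𝒜 n)]

theorem quotDim_false_true_le_quotDim_true_false (hGr : GrProp 𝒜 l r d) {o : List Bool} {e : ℕ}
    (ho : o.length + 2 ≤ r) (he : o.count true + e + 1 = d) :
    quotDim 𝒜 (wordIdeal l (o ++ [false, true])) e ≤
      quotDim 𝒜 (wordIdeal l (o ++ [true, false])) e := by
  have hle := (hGr o (by omega)).2.2 ho
  rw [show d - o.count true - 1 = e by omega] at hle
  have := quotDim_add_homDim 𝒜 (wordIdeal l (o ++ [false, true])) e
  have := quotDim_add_homDim 𝒜 (wordIdeal l (o ++ [true, false])) e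
  omega

theorem quotDim_append_false_one_le (hGr : GrProp 𝒜 l r d) (hl : ∀ j < r, l j ∈ 𝒜 1)
    {o : List Bool} (ho : o.length < r) :
    quotDim 𝒜 (wordIdeal l (o ++ [false])) 1 ≤ quotDim 𝒜 (wordIdeal l o) 1 - 1 := by
  have hsplit := quotDim_wordIdeal_succ 𝒜 (fun j hj => hl j (hj.trans_lt ho)) 0
  rw [zero_add] at hsplit
  by_cases hm : (HomogeneousIdeal.irrelevant 𝒜).toIdeal ≤ wordIdeal l o
  · have := quotDim_eq_zero_of_irrelevant_le 𝒜 hm one_pos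
    omega
  · have hcolon : 1 ∉ wordIdeal l (o ++ [true]) := by
      rw [wordIdeal_append_true, Ideal.mem_colon_span_singleton, one_mul]
      exact (hGr o ho.le).1 hm ho
    have := quotDim_zero_pos 𝒜 hcolon
    omega

theorem quotDim_append_false_le_add (hGr : GrProp 𝒜 l r d) (hl : ∀ j < r, l j ∈ 𝒜 1)
    {o : List Bool} {e : ℕ} (ho : o.length + 2 ≤ r) (he : o.count true + e + 1 = d) :
    quotDim 𝒜 (wordIdeal l (o ++ [false])) (e + 1) ≤
      quotDim 𝒜 (wordIdeal l (o ++ [true, false])) e +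
        quotDim 𝒜 (wordIdeal l (o ++ [false, false])) (e + 1) := by
  have hsplit := quotDim_wordIdeal_succ 𝒜 (o := o ++ [false])
    (fun j hj => hl j (by grind)) e
  simp only [List.append_assoc, List.cons_append, List.nil_append] at hsplit
  rw [hsplit]
  exact Nat.add_le_add_right (hGr.quotDim_false_true_le_quotDim_true_false ho he) _

theorem quotDim_append_false_le (hGr : GrProp 𝒜 l r d) (hl : ∀ j < r, l j ∈ 𝒜 1)
    {o : List Bool} {e : ℕ} (ho : o.length < r) (he : o.count true + (e + 1) = d) :
    quotDim 𝒜 (wordIdeal l (o ++ [false])) (e + 1) ≤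
      macaulayDown (quotDim 𝒜 (wordIdeal l o) (e + 1)) (e + 1) := by
  obtain ⟨t, ht⟩ := Nat.exists_eq_add_of_le (Nat.succ_le_of_lt ho)
  induction t generalizing o e with
  | zero =>
    have hm := (hGr (o ++ [false]) (by grind)).2.1 (by grind) (by grind)
    rw [quotDim_eq_zero_of_irrelevant_le 𝒜 hm e.succ_pos]
    exact Nat.zero_le _
  | succ t ih =>
    cases e with
    | zero =>
      rw [zero_add, macaulayDown_one_right]
      exact hGr.quotDim_append_false_one_le hl ho
    | succ e =>
      have ih_colon := ih (o := o ++ [true]) (e := e) (by grind) (by grind) (by grind)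
      have ih_sum := ih (o := o ++ [false]) (e := e + 1) (by grind) (by grind) (by grind)
      simp only [List.append_assoc, List.cons_append, List.nil_append] at ih_colon ih_sum
      apply le_macaulayDown_of_le_add
      rw [quotDim_wordIdeal_succ 𝒜 (fun j hj => hl j (hj.trans_lt ho)) (e + 1),
        Nat.add_sub_cancel]
      exact (hGr.quotDim_append_false_le_add hl (by omega) (by omega)).trans
        (add_le_add ih_colon ih_sum)

end GrProp

theorem hyperplane_restriction_of_GrProp_general
    {K R : Type*} [Field K] [CommRing R] [Algebra K R]
    (𝒜 : ℕ → Submodule K R) [GradedAlgebra 𝒜] [FiniteDimensional K (𝒜 0)]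
    {d r : ℕ} (hd : 0 < d) (hrpos : 0 < r) {l : ℕ → R} (hl : ∀ j < r, l j ∈ 𝒜 1)
    (hGr : GrProp 𝒜 l r d) :
    quotDim 𝒜 (Ideal.span {l 0}) d ≤ macaulayDown (Module.finrank K (𝒜 d)) d := by
  have := hGr.finiteDimensional_component hd hl
  obtain ⟨e, rfl⟩ : ∃ e, d = e + 1 := ⟨d - 1, by omega⟩
  have hle := hGr.quotDim_append_false_le hl (o := []) (e := e) hrpos (by simp)
  rwa [wordIdeal_append_false, wordIdeal_nil, bot_sup_eq, quotDim_bot] at hle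

/-- **Hyperplane restriction theorem for forms satisfying (Gr,d).**  If the linear forms
`l 0, …, l (r-1)` of a standard graded algebra `R` satisfy property (Gr,d), then
`dim_K (R/(l 0))_d ≤ (dim_K R_d)_⟨d⟩`. -/
theorem hyperplane_restriction_of_GrProp
    {K R : Type*} [Field K] [CommRing R] [Algebra K R]
    (𝒜 : ℕ → Submodule K R) [GradedAlgebra 𝒜]
    (h0 : 𝒜 0 = (1 : Submodule K R)) (hstd : ∀ n, 𝒜 (n + 1) = 𝒜 1 * 𝒜 n)
    [FiniteDimensional K (𝒜 1)] (d r : ℕ) (hd : 0 < d) (hrpos : 0 < r)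
    (l : ℕ → R) (hl : ∀ j < r, l j ∈ 𝒜 1)
    (hGr : GrProp 𝒜 l r d) :
    quotDim 𝒜 (Ideal.span {l 0}) d ≤ macaulayDown (Module.finrank K (𝒜 d)) d := by
  have : FiniteDimensional K (𝒜 0) := by rw [h0, Submodule.one_eq_span]; infer_instance
  exact hyperplane_restriction_of_GrProp_general 𝒜 hd hrpos hl hGr
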